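/- There exists a sequence (U_k)_{k≥1} where each U_k is a cofinite ultrafilter on FIN_k, such that for all 0 < j ≤ k and every nondecreasing surjection f : {0,1,…,k} → {0,1,…,j}, one has U_k + U_j = U_j + U_k = U_k and f(U_k) = U_j. -/

import Mathlib

/-!
Call a sequence of cofinite ultrafilters `V k` on `FIN k` coherent if `f (V k) = V j` for every
nondecreasing surjection `f : {0,…,k} → {0,…,j}`. A function in `FIN k` need not take the values
strictly between `0` and `k`, so for a nonprincipal ultrafilter `p` on `ℕ` the images of `p` under
`x ↦ k · 1_{x}` already form a coherent sequence. Coherent sequences form a closed subsemigroup of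
a product of the compact right topological semigroup of all ultrafilters on `ℕ → ℕ`, and the
Ellis–Numakura lemma finds idempotents in its nonempty closed subsemigroups.

If `V` is coherent and idempotent, then `V 0 + ⋯ + V k` and `V k + ⋯ + V 0` are coherent in `k`: a
nondecreasing surjection maps neighbours to equal or consecutive levels, and equal ones coalesce.

Suppose that `V` is coherent and satisfies the absorption identities up to level `n`. Let `W` be an
idempotent among the coherent sequences agreeing with `V` up to `n`. The sequence of the sums
`W k + ⋯ + W 0` still agrees with `V` up to `n`, and its term of index `n + 1` is unchanged by
adding `V n` on the right. Right translations are continuous, so this last condition is closed, and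
we may choose `W` with `W (n + 1) + V n = W (n + 1)` from the start. Then `V n + W (n + 1)` is
idempotent and absorbs `V n` on both sides, so the sums `W 0 + ⋯ + W k` satisfy the absorption
identities up to level `n + 1`. The sequences obtained by iteration stabilize at each level, and
their limit is coherent because coherence is a closed condition.
-/

open Filter

/-- `FIN k`: finitely supported functions `ℕ → {0,…,k}` attaining the maximum value `k`. -/
def FIN (k : ℕ) : Set (ℕ → ℕ) :=
  {b | (∀ n, b n ≤ k) ∧ {n | b n ≠ 0}.Finite ∧ ∃ n, b n = k}

/-- `Supp b < Supp b'`. -/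
def SuppLT (b b' : ℕ → ℕ) : Prop :=
  ∀ m, b m ≠ 0 → ∀ m', b' m' ≠ 0 → m < m'

/-- `f` is (the extension to `ℕ` of) a nondecreasing surjection `{0,…,k} → {0,…,j}`. -/
def IsTetrisFn (k j : ℕ) (f : ℕ → ℕ) : Prop :=
  (∀ i i', i' ≤ i → i ≤ k → f i' ≤ f i) ∧ (∀ i, i ≤ k → f i ≤ j) ∧
    ∀ m, m ≤ j → ∃ i, i ≤ k ∧ f i = m

/-- An ultrafilter is cofinite if for every `n` the set of `b` with `b n = 0` belongs
to it. -/
def IsCofinite (U : Ultrafilter (ℕ → ℕ)) : Prop := ∀ n, {b : ℕ → ℕ | b n = 0} ∈ U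

/-- `A ∈ U + V`: for `U`-almost all `b`, for `V`-almost all `b'`,
`Supp b < Supp b'` and `b + b' ∈ A`. -/
def memSum (U V : Ultrafilter (ℕ → ℕ)) (A : Set (ℕ → ℕ)) : Prop :=
  ∀ᶠ b in (U : Filter (ℕ → ℕ)), ∀ᶠ b' in (V : Filter (ℕ → ℕ)),
    SuppLT b b' ∧ b + b' ∈ A

/-- The generalized tetris operation `b ↦ f ∘ b`. -/
def tetrisMap (f : ℕ → ℕ) : (ℕ → ℕ) → ℕ → ℕ := fun b => f ∘ b

section Absorption

/-! ### Decreasing sequences of idempotents in compact semigroups -/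

variable {X : Type*}

/-- `a + b = b + a = a`. For idempotents this is the usual order `a ≤ b`. -/
def AddAbsorbs [Add X] (a b : X) : Prop := a + b = a ∧ b + a = a

/-- The identities `V k + V j = V j + V k = V k` for `j ≤ k ≤ n`; as `j = k` is allowed, they
include the idempotence of `V k`. -/
def AbsorbsUpTo [Add X] (n : ℕ) (V : ℕ → X) : Prop :=
  ∀ ⦃j k⦄, j ≤ k → k ≤ n → AddAbsorbs (V k) (V j)

/-- The partial sum `V 0 + V 1 + ⋯ + V k` in a possibly noncommutative semigroup. -/
def leftSum [Add X] (V : ℕ → X) : ℕ → X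
  | 0 => V 0
  | k + 1 => leftSum V k + V (k + 1)

/-- The reversed partial sum `V k + ⋯ + V 1 + V 0`. -/
def rightSum [Add X] (V : ℕ → X) : ℕ → X
  | 0 => V 0
  | k + 1 => V (k + 1) + rightSum V k

/-- `f 0 = 0`, and each of the first `k` increments of `f` is `0` or `1`: the nondecreasing
surjections from `{0,…,k}` onto an initial segment of `ℕ`, in a form suited to induction on
`k`. -/
def HasUnitSteps (f : ℕ → ℕ) (k : ℕ) : Prop :=
  f 0 = 0 ∧ ∀ i < k, f (i + 1) = f i ∨ f (i + 1) = f i + 1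

theorem HasUnitSteps.mono {f : ℕ → ℕ} {j k : ℕ} (hf : HasUnitSteps f k) (hjk : j ≤ k) :
    HasUnitSteps f j :=
  ⟨hf.1, fun i hi => hf.2 i (hi.trans_le hjk)⟩

theorem AbsorbsUpTo.congr [Add X] {n : ℕ} {V W : ℕ → X} (hV : AbsorbsUpTo n V)
    (hVW : Set.EqOn V W (Set.Iic n)) : AbsorbsUpTo n W := by
  intro j k hjk hk
  rw [← hVW hk, ← hVW (hjk.trans hk)]
  exact hV hjk hk

theorem eqOn_leftSum [Add X] {n : ℕ} {V W : ℕ → X} (hV : AbsorbsUpTo n V)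
    (hWV : Set.EqOn W V (Set.Iic n)) : Set.EqOn (leftSum W) V (Set.Iic n) := by
  intro i (hi : i ≤ n)
  induction i with
  | zero => exact hWV hi
  | succ i ih => rw [leftSum, ih (by omega), hWV hi, (hV i.le_succ hi).2]

theorem eqOn_rightSum [Add X] {n : ℕ} {V W : ℕ → X} (hV : AbsorbsUpTo n V)
    (hWV : Set.EqOn W V (Set.Iic n)) : Set.EqOn (rightSum W) V (Set.Iic n) := by
  intro i (hi : i ≤ n)
  induction i with
  | zero => exact hWV hi
  | succ i ih => rw [rightSum, ih (by omega), hWV hi, (hV i.le_succ hi).1]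

section AddSemigroup

variable [AddSemigroup X]

theorem AddAbsorbs.trans {a b c : X} (hab : AddAbsorbs a b) (hbc : AddAbsorbs b c) :
    AddAbsorbs a c := by
  constructor
  · rw [← hab.1, add_assoc, hbc.1]
  · rw [← hab.2, ← add_assoc, hbc.2]

theorem addAbsorbs_add {v w : X} (hv : v + v = v) (hwv : w + v = w) : AddAbsorbs (v + w) v :=
  ⟨by rw [add_assoc, hwv], by rw [← add_assoc, hv]⟩

theorem add_add_self_of_absorbs {v w : X} (hw : w + w = w) (hwv : w + v = w) :
    (v + w) + (v + w) = v + w := by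
  rw [add_assoc, ← add_assoc w, hwv, hw]

theorem AbsorbsUpTo.succ {n : ℕ} {V : ℕ → X} (hV : AbsorbsUpTo n V)
    (hn : AddAbsorbs (V (n + 1)) (V n)) (hid : V (n + 1) + V (n + 1) = V (n + 1)) :
    AbsorbsUpTo (n + 1) V := by
  intro j k hjk hk
  obtain hk | rfl := Nat.le_succ_iff.1 hk
  · exact hV hjk hk
  obtain hj | rfl := Nat.le_succ_iff.1 hjk
  · exact hn.trans (hV hj le_rfl)
  · exact ⟨hid, hid⟩

theorem leftSum_add_self {V : ℕ → X} {k : ℕ} (hk : V k + V k = V k) :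
    leftSum V k + V k = leftSum V k := by
  cases k with
  | zero => exact hk
  | succ k => rw [leftSum, add_assoc, hk]

theorem self_add_rightSum {V : ℕ → X} {k : ℕ} (hk : V k + V k = V k) :
    V k + rightSum V k = rightSum V k := by
  cases k with
  | zero => exact hk
  | succ k => rw [rightSum, ← add_assoc, hk]

theorem map_leftSum {Y : Type*} [AddSemigroup Y] {V : ℕ → X} {W : ℕ → Y} {φ : X → Y}
    {f : ℕ → ℕ} {k : ℕ} (hW : W + W = W) (hf : HasUnitSteps f k)
    (hφ : ∀ i ≤ k, φ (V i) = W (f i))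
    (hadd : ∀ i < k, φ (leftSum V i + V (i + 1)) = φ (leftSum V i) + φ (V (i + 1))) :
    φ (leftSum V k) = leftSum W (f k) := by
  induction k with
  | zero => simpa only [hf.1, leftSum] using hφ 0 le_rfl
  | succ k ih =>
    rw [leftSum, hadd k k.lt_succ_self, hφ _ le_rfl,
      ih (hf.mono k.le_succ) (fun i hi => hφ i (by omega)) fun i hi => hadd i (by omega)]
    obtain h | h := hf.2 k k.lt_succ_self
    · rw [h, leftSum_add_self (congrFun hW (f k))]
    · rw [h, leftSum]

theorem map_rightSum {Y : Type*} [AddSemigroup Y] {V : ℕ → X} {W : ℕ → Y} {φ : X → Y}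
    {f : ℕ → ℕ} {k : ℕ} (hW : W + W = W) (hf : HasUnitSteps f k)
    (hφ : ∀ i ≤ k, φ (V i) = W (f i))
    (hadd : ∀ i < k, φ (V (i + 1) + rightSum V i) = φ (V (i + 1)) + φ (rightSum V i)) :
    φ (rightSum V k) = rightSum W (f k) := by
  induction k with
  | zero => simpa only [hf.1, rightSum] using hφ 0 le_rfl
  | succ k ih =>
    rw [rightSum, hadd k k.lt_succ_self, hφ _ le_rfl,
      ih (hf.mono k.le_succ) (fun i hi => hφ i (by omega)) fun i hi => hadd i (by omega)]
    obtain h | h := hf.2 k k.lt_succ_self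
    · rw [h, self_add_rightSum (congrFun hW (f k))]
    · rw [h, rightSum]

/-- The families that agree with a given family of idempotents on `s`. -/
def eqOnAddSubsemigroup {ι : Type*} {s : Set ι} {V : ι → X} (hV : ∀ i ∈ s, V i + V i = V i) :
    AddSubsemigroup (ι → X) where
  carrier := {W | Set.EqOn W V s}
  add_mem' hW hW' i hi := by rw [Pi.add_apply, hW hi, hW' hi, hV i hi]

/-- The solutions of `x + a = x`, which form a left ideal. -/
def rightAbsorbers (a : X) : AddSubsemigroup X where
  carrier := {x | x + a = x}
  add_mem' {x y} _ (hy : y + a = y) := by rw [Set.mem_ofPred_eq, add_assoc, hy]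

end AddSemigroup

section Topology

variable [TopologicalSpace X]

theorem isClosed_setOf_eqOn [T2Space X] {ι : Type*} (V : ι → X) (s : Set ι) :
    IsClosed {W : ι → X | Set.EqOn W V s} := by
  simp only [Set.EqOn, Set.ofPred_forall]
  exact isClosed_iInter fun i => isClosed_iInter fun _ =>
    isClosed_eq (continuous_apply i) continuous_const

theorem isClosed_rightAbsorbers [AddSemigroup X] [T2Space X] {a : X}
    (ha : Continuous fun x : X => x + a) : IsClosed (rightAbsorbers a : Set X) :=
  isClosed_eq ha continuous_id

theorem exists_mem_forall_of_extension {S : Set (ℕ → X)} (hS : IsClosed S)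
    {P : ℕ → (ℕ → X) → Prop}
    (hP : ∀ n V W, P n V → Set.EqOn V W (Set.Iic n) → P n W) (hzero : ∃ V ∈ S, P 0 V)
    (hsucc : ∀ n, ∀ V ∈ S, P n V → ∃ W ∈ S, P (n + 1) W ∧ Set.EqOn W V (Set.Iic n)) :
    ∃ V ∈ S, ∀ n, P n V := by
  obtain ⟨V₀, hV₀S, hV₀⟩ := hzero
  choose! next hnextS hnext hagree using hsucc
  let s : ℕ → ℕ → X := fun n => Nat.rec V₀ next n
  have hs : ∀ n, s n ∈ S ∧ P n (s n) := by
    intro n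
    induction n with
    | zero => exact ⟨hV₀S, hV₀⟩
    | succ n ih => exact ⟨hnextS n _ ih.1 ih.2, hnext n _ ih.1 ih.2⟩
  have hstable : ∀ i n, i ≤ n → s n i = s i i := by
    intro i n hin
    induction n, hin using Nat.le_induction with
    | base => rfl
    | succ n hn ih => exact (hagree n _ (hs n).1 (hs n).2 hn).trans ih
  have hlim : Tendsto s atTop (nhds fun i => s i i) := tendsto_pi_nhds.2 fun i =>
    tendsto_const_nhds.congr' <| (eventually_ge_atTop i).mono fun n hn => (hstable i n hn).symm
  exact ⟨fun i => s i i, hS.mem_of_tendsto hlim (Eventually.of_forall fun n => (hs n).1),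
    fun n => hP n _ _ (hs n).2 fun i hi => hstable i n hi⟩

end Topology

section CompactSemigroup

variable [AddSemigroup X] [TopologicalSpace X] [CompactSpace X] [T2Space X]

theorem exists_mem_add_self_eq {ι : Type*} (hX : ∀ a : X, Continuous fun x : X => x + a)
    {S : AddSubsemigroup (ι → X)} (hne : (S : Set (ι → X)).Nonempty)
    (hS : IsClosed (S : Set (ι → X))) : ∃ V ∈ S, V + V = V :=
  exists_idempotent_in_compact_add_subsemigroup (M := ι → X)
    (fun W => continuous_pi fun i => (hX (W i)).comp (continuous_apply i))
    S hne hS.isCompact fun _ hV _ hW => S.add_mem hV hW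

variable {S : AddSubsemigroup (ℕ → X)} {n : ℕ} {V : ℕ → X}

theorem exists_idempotent_eqOn_absorbing_right (hX : ∀ a : X, Continuous fun x : X => x + a)
    (hS : IsClosed (S : Set (ℕ → X))) (hright : ∀ W ∈ S, W + W = W → rightSum W ∈ S)
    (hVS : V ∈ S) (hV : AbsorbsUpTo n V) :
    ∃ W ∈ S, W + W = W ∧ Set.EqOn W V (Set.Iic n) ∧ W (n + 1) + V n = W (n + 1) := by
  have hVid : ∀ i ∈ Set.Iic n, V i + V i = V i := fun i hi => (hV le_rfl hi).1
  let C := S ⊓ eqOnAddSubsemigroup hVid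
  have hC : IsClosed (C : Set (ℕ → X)) := hS.inter (isClosed_setOf_eqOn V _)
  have hCne : (C : Set (ℕ → X)).Nonempty := ⟨V, hVS, Set.eqOn_refl V _⟩
  obtain ⟨W', ⟨hW'S, hW'V⟩, hW'⟩ := exists_mem_add_self_eq hX hCne hC
  have hagree : Set.EqOn (rightSum W') V (Set.Iic n) := eqOn_rightSum hV hW'V
  let D := C ⊓ (rightAbsorbers (V n)).comap (Pi.evalAddHom (fun _ => X) (n + 1))
  have hD : IsClosed (D : Set (ℕ → X)) :=
    hC.inter <| (isClosed_rightAbsorbers (hX (V n))).preimage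
      (continuous_apply (n + 1) : Continuous fun W : ℕ → X => W (n + 1))
  have hW'D : rightSum W' ∈ D := by
    refine ⟨⟨hright W' hW'S hW', hagree⟩, ?_⟩
    change W' (n + 1) + rightSum W' n + V n = W' (n + 1) + rightSum W' n
    rw [hagree Set.self_mem_Iic, add_assoc, hVid n Set.self_mem_Iic]
  obtain ⟨W, ⟨⟨hWS, hWV⟩, hWn⟩, hW⟩ := exists_mem_add_self_eq hX ⟨_, hW'D⟩ hD
  exact ⟨W, hWS, hW, hWV, hWn⟩

theorem exists_absorbsUpTo_succ (hX : ∀ a : X, Continuous fun x : X => x + a)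
    (hS : IsClosed (S : Set (ℕ → X))) (hleft : ∀ W ∈ S, W + W = W → leftSum W ∈ S)
    (hright : ∀ W ∈ S, W + W = W → rightSum W ∈ S) (hVS : V ∈ S) (hV : AbsorbsUpTo n V) :
    ∃ W ∈ S, AbsorbsUpTo (n + 1) W ∧ Set.EqOn W V (Set.Iic n) := by
  obtain ⟨W, hWS, hW, hWV, hWn⟩ := exists_idempotent_eqOn_absorbing_right hX hS hright hVS hV
  have hagree : Set.EqOn (leftSum W) V (Set.Iic n) := eqOn_leftSum hV hWV
  have hn : leftSum W n = V n := hagree Set.self_mem_Iic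
  refine ⟨leftSum W, hleft W hWS hW, (hV.congr hagree.symm).succ ?_ ?_, hagree⟩
  · rw [leftSum, hn]
    exact addAbsorbs_add (hV le_rfl le_rfl).1 hWn
  · rw [leftSum, hn]
    exact add_add_self_of_absorbs (congrFun hW (n + 1)) hWn

theorem exists_mem_forall_absorbsUpTo (hX : ∀ a : X, Continuous fun x : X => x + a)
    (hne : (S : Set (ℕ → X)).Nonempty) (hS : IsClosed (S : Set (ℕ → X)))
    (hleft : ∀ W ∈ S, W + W = W → leftSum W ∈ S)
    (hright : ∀ W ∈ S, W + W = W → rightSum W ∈ S) : ∃ V ∈ S, ∀ n, AbsorbsUpTo n V := by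
  refine exists_mem_forall_of_extension hS (fun _ _ _ => AbsorbsUpTo.congr) ?_
    fun _ _ => exists_absorbsUpTo_succ hX hS hleft hright
  obtain ⟨V, hVS, hV⟩ := exists_mem_add_self_eq hX hne hS
  refine ⟨V, hVS, fun j k hjk hk => ?_⟩
  obtain rfl : k = 0 := Nat.le_zero.1 hk
  obtain rfl : j = 0 := Nat.le_zero.1 hjk
  exact ⟨congrFun hV 0, congrFun hV 0⟩

end CompactSemigroup

end Absorption

/-! ### Sums of cofinite ultrafilters -/

attribute [local instance] Ultrafilter.add Ultrafilter.addSemigroup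

theorem continuous_ultrafilter_map {α β : Type*} (g : α → β) :
    Continuous fun U : Ultrafilter α => U.map g :=
  ultrafilterBasis_is_basis.continuous_iff.2 <| Set.forall_mem_range.2 fun A =>
    ultrafilter_isOpen_basic (g ⁻¹' A)

theorem ultrafilter_map_add {M N : Type*} [Add M] [Add N] {U V : Ultrafilter M}
    {g : M → N} (hg : ∀ᶠ b in U, ∀ᶠ b' in V, g (b + b') = g b + g b') :
    (U + V).map g = U.map g + V.map g := by
  ext A
  refine eventually_congr (hg.mono fun b hb => eventually_congr (hb.mono fun b' hb' => ?_))
  change g (b + b') ∈ A ↔ g b + g b' ∈ A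
  rw [hb']

theorem SuppLT.eq_zero_or_eq_zero {b b' : ℕ → ℕ} (h : SuppLT b b') (t : ℕ) :
    b t = 0 ∨ b' t = 0 := by
  by_contra! ht
  exact (h t ht.1 t ht.2).false

theorem SuppLT.tetrisMap_add {b b' f : ℕ → ℕ} (h : SuppLT b b') (hf : f 0 = 0) :
    tetrisMap f (b + b') = tetrisMap f b + tetrisMap f b' := by
  funext t
  obtain ht | ht := h.eq_zero_or_eq_zero t <;> simp [tetrisMap, ht, hf]

theorem SuppLT.add_mem_FIN {j k : ℕ} {b b' : ℕ → ℕ} (h : SuppLT b b') (hb : b ∈ FIN j)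
    (hb' : b' ∈ FIN k) : b + b' ∈ FIN (max j k) := by
  obtain ⟨hbj, hbfin, m, hm⟩ := hb
  obtain ⟨hb'k, hb'fin, m', hm'⟩ := hb'
  have hval : ∀ t, (b + b') t = max (b t) (b' t) := by
    intro t
    obtain ht | ht := h.eq_zero_or_eq_zero t <;> simp [ht]
  refine ⟨fun t => hval t ▸ max_le_max (hbj t) (hb'k t), ?_, ?_⟩
  · refine (hbfin.union hb'fin).subset fun t (ht : b t + b' t ≠ 0) => ?_
    by_contra! hc
    simp_all
  · obtain hjk | hkj := le_total j k
    · exact ⟨m', by rw [hval, hm', max_eq_right ((hbj m').trans hjk), max_eq_right hjk]⟩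
    · exact ⟨m, by rw [hval, hm, max_eq_left ((hb'k m).trans hkj), max_eq_left hkj]⟩

theorem IsCofinite.eventually_suppLT {V : Ultrafilter (ℕ → ℕ)} (hV : IsCofinite V) {b : ℕ → ℕ}
    (hb : {n | b n ≠ 0}.Finite) : ∀ᶠ b' in V, SuppLT b b' := by
  obtain ⟨N, hN⟩ := hb.bddAbove
  filter_upwards [(eventually_all_finite (Set.finite_Iic N)).2 fun t _ => hV t]
    with b' hb' m hm m' hm'
  have hm'N : N < m' := not_le.1 fun h => hm' (hb' m' h)
  exact (hN hm).trans_lt hm'N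

theorem IsCofinite.add {U V : Ultrafilter (ℕ → ℕ)} (hU : IsCofinite U) (hV : IsCofinite V) :
    IsCofinite (U + V) := fun n =>
  (Ultrafilter.eventually_add U V fun b => b n = 0).2 <| Eventually.mono (hU n) fun _ hb =>
    Eventually.mono (hV n) fun _ hb' => Nat.add_eq_zero_iff.2 ⟨hb, hb'⟩

/-- `U` is a cofinite ultrafilter on `FIN k`, viewed as an ultrafilter on `ℕ → ℕ`. -/
def IsCofiniteOnFIN (k : ℕ) (U : Ultrafilter (ℕ → ℕ)) : Prop :=
  FIN k ∈ U ∧ IsCofinite U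

section

variable {j k : ℕ} {U V : Ultrafilter (ℕ → ℕ)}

theorem IsCofiniteOnFIN.eventually_suppLT (hU : IsCofiniteOnFIN k U) (hV : IsCofinite V) :
    ∀ᶠ b in U, ∀ᶠ b' in V, SuppLT b b' :=
  Eventually.mono hU.1 fun _ hb => hV.eventually_suppLT hb.2.1

theorem IsCofiniteOnFIN.memSum_iff (hU : IsCofiniteOnFIN k U) (hV : IsCofinite V)
    (A : Set (ℕ → ℕ)) : memSum U V A ↔ A ∈ U + V :=
  eventually_congr <| (hU.eventually_suppLT hV).mono fun _ hb =>
    eventually_congr <| hb.mono fun _ hb' => and_iff_right hb'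

theorem IsCofiniteOnFIN.map_add (hU : IsCofiniteOnFIN k U) (hV : IsCofinite V) {f : ℕ → ℕ}
    (hf : f 0 = 0) :
    (U + V).map (tetrisMap f) = U.map (tetrisMap f) + V.map (tetrisMap f) :=
  ultrafilter_map_add <| (hU.eventually_suppLT hV).mono fun _ hb =>
    hb.mono fun _ hb' => hb'.tetrisMap_add hf

theorem IsCofiniteOnFIN.add (hU : IsCofiniteOnFIN j U) (hV : IsCofiniteOnFIN k V) :
    IsCofiniteOnFIN (max j k) (U + V) := by
  refine ⟨?_, hU.2.add hV.2⟩
  refine (Ultrafilter.eventually_add U V (· ∈ FIN (max j k))).2 ?_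
  filter_upwards [hU.1, hU.eventually_suppLT hV.2] with b hb hlt
  filter_upwards [hV.1, hlt] with b' hb' hbb'
  exact hbb'.add_mem_FIN hb hb'

end

theorem isCofiniteOnFIN_leftSum {V : ℕ → Ultrafilter (ℕ → ℕ)}
    (hV : ∀ k, IsCofiniteOnFIN k (V k)) (k : ℕ) : IsCofiniteOnFIN k (leftSum V k) := by
  induction k with
  | zero => exact hV 0
  | succ k ih => simpa [leftSum] using ih.add (hV (k + 1))

theorem isCofiniteOnFIN_rightSum {V : ℕ → Ultrafilter (ℕ → ℕ)}
    (hV : ∀ k, IsCofiniteOnFIN k (V k)) (k : ℕ) : IsCofiniteOnFIN k (rightSum V k) := by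
  induction k with
  | zero => exact hV 0
  | succ k ih => simpa [rightSum] using (hV (k + 1)).add ih

/-! ### Coherent sequences -/

theorem IsTetrisFn.map_zero {k j : ℕ} {f : ℕ → ℕ} (hf : IsTetrisFn k j f) : f 0 = 0 := by
  obtain ⟨i, hi, hfi⟩ := hf.2.2 0 j.zero_le
  exact Nat.le_zero.1 (hfi ▸ hf.1 i 0 i.zero_le hi)

theorem IsTetrisFn.map_top {k j : ℕ} {f : ℕ → ℕ} (hf : IsTetrisFn k j f) : f k = j := by
  obtain ⟨i, hi, hfi⟩ := hf.2.2 j le_rfl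
  exact (hf.2.1 k le_rfl).antisymm (hfi ▸ hf.1 k i hi le_rfl)

theorem IsTetrisFn.hasUnitSteps {k j : ℕ} {f : ℕ → ℕ} (hf : IsTetrisFn k j f) :
    HasUnitSteps f k := by
  refine ⟨hf.map_zero, fun i hi => ?_⟩
  have hmono : f i ≤ f (i + 1) := hf.1 _ _ i.le_succ hi
  suffices f (i + 1) ≤ f i + 1 by omega
  by_contra! hjump
  -- the skipped value `f i + 1` would have to be attained strictly between `i` and `i + 1`
  obtain ⟨m, hm, hfm⟩ := hf.2.2 (f i + 1) (hjump.le.trans (hf.2.1 _ hi))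
  obtain hmi | him := le_or_gt m i
  · have := hf.1 i m hmi hi.le
    omega
  · have := hf.1 m (i + 1) him hm
    omega

/-- Sequences of cofinite ultrafilters on `FIN k` compatible with all nondecreasing surjections
`{0,…,k} → {0,…,f k}`. The index `k = 0`, where `FIN 0 = {0}`, is included. -/
def Coherent (V : ℕ → Ultrafilter (ℕ → ℕ)) : Prop :=
  (∀ k, IsCofiniteOnFIN k (V k)) ∧
    ∀ k f, HasUnitSteps f k → (V k).map (tetrisMap f) = V (f k)

theorem Coherent.add {V W : ℕ → Ultrafilter (ℕ → ℕ)} (hV : Coherent V) (hW : Coherent W) :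
    Coherent (V + W) := by
  refine ⟨fun k => by simpa using (hV.1 k).add (hW.1 k), fun k f hf => ?_⟩
  rw [Pi.add_apply, (hV.1 k).map_add (hW.1 k).2 hf.1, hV.2 k f hf, hW.2 k f hf, Pi.add_apply]

/-- Coherent sequences as a subsemigroup, under pointwise addition of ultrafilters. -/
def coherentAddSubsemigroup : AddSubsemigroup (ℕ → Ultrafilter (ℕ → ℕ)) where
  carrier := {V | Coherent V}
  add_mem' := Coherent.add

theorem isClosed_setOf_coherent : IsClosed {V | Coherent V} := by
  have hmem : ∀ k (A : Set (ℕ → ℕ)), IsClosed {V : ℕ → Ultrafilter (ℕ → ℕ) | A ∈ V k} :=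
    fun k A => (ultrafilter_isClosed_basic A).preimage
      (continuous_apply k : Continuous fun V : ℕ → Ultrafilter (ℕ → ℕ) => V k)
  simp only [Coherent, IsCofiniteOnFIN, IsCofinite, Set.ofPred_and, Set.ofPred_forall]
  refine (isClosed_iInter fun k => (hmem k _).inter (isClosed_iInter fun n => hmem k _)).inter ?_
  exact isClosed_iInter fun k => isClosed_iInter fun f => isClosed_iInter fun _ =>
    isClosed_eq ((continuous_ultrafilter_map _).comp (continuous_apply k)) (continuous_apply (f k))

theorem Coherent.leftSum {V : ℕ → Ultrafilter (ℕ → ℕ)} (hV : Coherent V) (hid : V + V = V) :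
    Coherent (leftSum V) :=
  ⟨isCofiniteOnFIN_leftSum hV.1, fun _ f hf =>
    map_leftSum (φ := Ultrafilter.map (tetrisMap f)) hid hf (fun i hi => hV.2 i f (hf.mono hi))
      fun i _ => (isCofiniteOnFIN_leftSum hV.1 i).map_add (hV.1 (i + 1)).2 hf.1⟩

theorem Coherent.rightSum {V : ℕ → Ultrafilter (ℕ → ℕ)} (hV : Coherent V) (hid : V + V = V) :
    Coherent (rightSum V) :=
  ⟨isCofiniteOnFIN_rightSum hV.1, fun _ f hf =>
    map_rightSum (φ := Ultrafilter.map (tetrisMap f)) hid hf (fun i hi => hV.2 i f (hf.mono hi))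
      fun i _ => (hV.1 (i + 1)).map_add (isCofiniteOnFIN_rightSum hV.1 i).2 hf.1⟩

theorem single_mem_FIN (x k : ℕ) : (Pi.single x k : ℕ → ℕ) ∈ FIN k := by
  refine ⟨fun n => ?_, (Set.finite_singleton x).subset fun n hn => ?_, x, by simp⟩
  · rw [Pi.single_apply]
    split_ifs <;> simp
  · by_contra hnx
    exact hn (Pi.single_eq_of_ne hnx _)

theorem tetrisMap_single {f : ℕ → ℕ} (hf : f 0 = 0) (x k : ℕ) :
    tetrisMap f (Pi.single x k) = Pi.single x (f k) := by
  funext n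
  exact Pi.apply_single (fun _ => f) (fun _ => hf) x k n

theorem coherent_map_single {p : Ultrafilter ℕ} (hp : (p : Filter ℕ) ≤ cofinite) :
    Coherent fun k => p.map fun x => (Pi.single x k : ℕ → ℕ) := by
  refine ⟨fun k => ⟨?_, fun n => ?_⟩, fun k f hf => ?_⟩
  · exact Ultrafilter.mem_map.2 (univ_mem' fun x => single_mem_FIN x k)
  · change ∀ᶠ x in (p : Filter ℕ), (Pi.single x k : ℕ → ℕ) n = 0
    filter_upwards [hp (Set.finite_singleton n).compl_mem_cofinite] with x hx
    exact Pi.single_eq_of_ne (Ne.symm hx) _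
  · rw [Ultrafilter.map_map]
    exact congrArg p.map (funext fun x => tetrisMap_single hf.1 x k)

/-- There is a sequence `(U_k)` of cofinite ultrafilters on `FIN k` such that for any
`0 < j ≤ k` and any nondecreasing surjection `f : {0,…,k} → {0,…,j}`,
`U_k + U_j = U_j + U_k = U_k` and `f(U_k) = U_j`. -/
theorem exists_coherent_ultrafilters :
    ∃ U : ℕ → Ultrafilter (ℕ → ℕ),
      (∀ k, 1 ≤ k → FIN k ∈ U k ∧ IsCofinite (U k)) ∧
      ∀ j k, 0 < j → j ≤ k →
        (∀ A : Set (ℕ → ℕ), memSum (U k) (U j) A ↔ A ∈ U k) ∧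
        (∀ A : Set (ℕ → ℕ), memSum (U j) (U k) A ↔ A ∈ U k) ∧
        ∀ f : ℕ → ℕ, IsTetrisFn k j f → (U k).map (tetrisMap f) = U j := by
  obtain ⟨U, ⟨hU, hcoh⟩, habs⟩ := exists_mem_forall_absorbsUpTo
    (S := coherentAddSubsemigroup) Ultrafilter.continuous_add_left
    ⟨_, coherent_map_single hyperfilter_le_cofinite⟩ isClosed_setOf_coherent
    (fun _ => Coherent.leftSum) fun _ => Coherent.rightSum
  refine ⟨U, fun k _ => hU k, fun j k _ hjk => ⟨fun A => ?_, fun A => ?_, fun f hf => ?_⟩⟩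
  · rw [(hU k).memSum_iff (hU j).2, (habs k hjk le_rfl).1]
  · rw [(hU j).memSum_iff (hU k).2, (habs k hjk le_rfl).2]
  · rw [hcoh k f hf.hasUnitSteps, hf.map_top]
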